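/- Let a ∈ ℤ^n with a ≥ 0, let a_0 := Σ_{i=1}^n a_i, and let A be the (n+1)×(n+2) integer matrix whose first n+1 columns form the identity matrix I_{n+1} and whose last column is (a_0, −2a_1, …, −2a_n)ᵀ. Then the Graver basis of A equals {±(−a_0, 2a_1, …, 2a_n, 1)} ⊂ ℤ^{n+2}. -/

import Mathlib

/-- The conformal order on `ℤ^N`: `x ⊑ y` iff for every coordinate `i`,
`x i * y i ≥ 0` and `|x i| ≤ |y i|`. -/
def Conf {N : ℕ} (x y : Fin N → ℤ) : Prop :=
  ∀ i, 0 ≤ x i * y i ∧ |x i| ≤ |y i|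

/-- The Graver basis of an integer matrix `A`: the set of `⊑`-minimal
elements of `{x : Ax = 0, x ≠ 0}`. -/
def GraverBasis {M N : ℕ} (A : Matrix (Fin M) (Fin N) ℤ) : Set (Fin N → ℤ) :=
  {x | (A.mulVec x = 0 ∧ x ≠ 0) ∧
    ∀ y, (A.mulVec y = 0 ∧ y ≠ 0) → Conf y x → y = x}

/-- The `(n+1) × (n+2)` matrix `A = (I_{n+1} | (a₀, -2a)ᵀ)`: its first `n+1`
columns are the identity and its last column is `(a₀, -2a₁, …, -2aₙ)ᵀ`. -/
def gadgetMatrix (n : ℕ) (a : Fin n → ℤ) : Matrix (Fin (n + 1)) (Fin (n + 2)) ℤ :=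
  Matrix.of fun i =>
    Fin.snoc (fun j : Fin (n + 1) => if i = j then 1 else 0)
      ((Fin.cons (∑ k, a k) (fun k => -2 * a k) : Fin (n + 1) → ℤ) i)

theorem graver_aux {M N : ℕ} (A : Matrix (Fin M) (Fin N) ℤ) (g : Fin N → ℤ) (l : Fin N)
    (hl : g l = 1) (hk : ∀ x, A.mulVec x = 0 ↔ x = x l • g) :
    GraverBasis A = {g, -g} := by
  have hg : g ≠ 0 := by
    intro h
    simp [h] at hl
  have hg0 : A.mulVec g = 0 := (hk g).2 (by rw [hl, one_smul])
  have hn0 : A.mulVec (-g) = 0 := by rw [Matrix.mulVec_neg, hg0, neg_zero]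
  have hn : -g ≠ 0 := neg_ne_zero.2 hg
  ext x
  simp only [GraverBasis, Set.mem_setOf_eq, Set.mem_insert_iff, Set.mem_singleton_iff]
  constructor
  · rintro ⟨⟨hx, hx0⟩, hmin⟩
    have hxt := (hk x).1 hx
    have hi : ∀ i, x i = x l * g i := fun i => by
      have := congrFun hxt i
      simpa using this
    have ht : x l ≠ 0 := by
      intro h
      rw [h, zero_smul] at hxt
      exact hx0 hxt
    have habs : ∀ i, |g i| ≤ |x i| := fun i => by
      rw [hi i, abs_mul]
      have := Int.one_le_abs ht
      nlinarith [abs_nonneg (g i)]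
    rcases lt_or_gt_of_ne ht with h | h
    · right
      refine (hmin (-g) ⟨hn0, hn⟩ fun i => ⟨?_, ?_⟩).symm
      · rw [hi i, Pi.neg_apply]
        nlinarith [mul_self_nonneg (g i)]
      · rw [Pi.neg_apply, abs_neg]
        exact habs i
    · left
      refine (hmin g ⟨hg0, hg⟩ fun i => ⟨?_, habs i⟩).symm
      rw [hi i]
      nlinarith [mul_self_nonneg (g i)]
  · rintro (rfl | rfl)
    · refine ⟨⟨hg0, hg⟩, fun y ⟨hy, hy0⟩ hc => ?_⟩
      have hyt := (hk y).1 hy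
      have ht : y l ≠ 0 := by
        intro h
        rw [h, zero_smul] at hyt
        exact hy0 hyt
      obtain ⟨h1, h2⟩ := hc l
      rw [hl] at h1 h2
      rw [abs_one, abs_le] at h2
      have : y l = 1 := by omega
      rw [hyt, this, one_smul]
    · refine ⟨⟨hn0, hn⟩, fun y ⟨hy, hy0⟩ hc => ?_⟩
      have hyt := (hk y).1 hy
      have ht : y l ≠ 0 := by
        intro h
        rw [h, zero_smul] at hyt
        exact hy0 hyt
      obtain ⟨h1, h2⟩ := hc l
      rw [Pi.neg_apply, hl] at h1 h2
      rw [abs_neg, abs_one, abs_le] at h2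
      have : y l = -1 := by omega
      rw [hyt, this, neg_one_smul]

/-- For `a ≥ 0`, the Graver basis of `A = (I_{n+1} | (a₀, -2a)ᵀ)` is
`{±(-a₀, 2a₁, …, 2aₙ, 1)}`. -/
theorem graverBasis_gadgetMatrix (n : ℕ) (a : Fin n → ℤ) (ha : ∀ i, 0 ≤ a i) :
    GraverBasis (gadgetMatrix n a) =
      {Fin.snoc (Fin.cons (-(∑ k, a k)) (fun k => 2 * a k)) 1,
        -Fin.snoc (Fin.cons (-(∑ k, a k)) (fun k => 2 * a k)) 1} := by
  refine graver_aux _ _ (Fin.last (n + 1)) (by simp) fun x => ?_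
  have hm : ∀ i, (gadgetMatrix n a).mulVec x i = x i.castSucc +
      (Fin.cons (∑ k, a k) (fun k => -2 * a k) : Fin (n + 1) → ℤ) i * x (Fin.last (n + 1)) := by
    intro i
    simp [gadgetMatrix, Matrix.mulVec, dotProduct, Fin.sum_univ_castSucc (n := n + 1)]
  constructor
  · intro h
    funext j
    refine Fin.lastCases ?_ (fun i => ?_) j
    · simp
    · have h1 := hm i
      rw [h, Pi.zero_apply] at h1
      simp only [Pi.smul_apply, smul_eq_mul, Fin.snoc_castSucc]
      revert h1
      refine Fin.cases ?_ (fun k => ?_) i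
      · simp only [Fin.cons_zero]
        intro h1
        linarith
      · simp only [Fin.cons_succ]
        intro h1
        linarith
  · intro h
    funext i
    have h1 := congrFun h i.castSucc
    rw [hm i, Pi.zero_apply]
    simp only [Pi.smul_apply, smul_eq_mul, Fin.snoc_castSucc] at h1
    revert h1
    refine Fin.cases ?_ (fun k => ?_) i
    · simp only [Fin.cons_zero]
      intro h1
      linarith
    · simp only [Fin.cons_succ]
      intro h1
      linarith
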